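/- arXiv:2203.10915 — 2 statements merged into one kernel-verified Lean document; each statement's English description precedes it below -/
import Mathlib

section
/- Let s ∈ (1,3). There is a constant C_s > 0 such that for all ξ₁ ∈ ℝ and all nonzero ξ₂ ∈ ℝ, the quantity |ξ₂|^{(s−3)/2} ∫_{−∞}^∞ e^{−2πi x ξ₁/|ξ₂|^{1/2}} |x|^{1−s/2} K_{(s−2)/4}(2πx²) dx is strictly positive and at most C_s (ξ₁⁴ + ξ₂²)^{−(3−s)/4}. -/
open Filter Set MeasureTheory
open scoped Real Classical

/-- The modified Bessel function of the first kind
`I_ν(z) = Σ_{n=0}^∞ (z/2)^{ν+2n} / (n! Γ(n+ν+1))`, with the principal branch of powers.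
(When `ν` is a negative integer the terms with `n + ν + 1 ≤ 0` vanish, since Mathlib's
`Complex.Gamma` vanishes at nonpositive integers, implementing the convention that the sum
starts at `n = -ν`.) -/
noncomputable def besselI (ν z : ℂ) : ℂ :=
  ∑' n : ℕ, (z / 2) ^ (ν + 2 * (n : ℂ)) / ((n.factorial : ℂ) * Complex.Gamma ((n : ℂ) + ν + 1))

/-- The modified Bessel function of the second kind:
`K_ν = (π / (2 sin (νπ))) (I_{-ν} - I_ν)` for non-integer `ν`, and for integer `ν` the limit
of this expression as the order tends to `ν`. -/

noncomputable def besselK (ν z : ℂ) : ℂ :=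
  if ∃ n : ℤ, ν = (n : ℂ) then
    limUnder (nhdsWithin ν {ν}ᶜ)
      (fun μ => ((Real.pi : ℂ) / (2 * Complex.sin (μ * (Real.pi : ℂ)))) *
        (besselI (-μ) z - besselI μ z))
  else ((Real.pi : ℂ) / (2 * Complex.sin (ν * (Real.pi : ℂ)))) * (besselI (-ν) z - besselI ν z)

/-!
For `|Re ν| < 1` and `z > 0`, `K_ν(z) = (z/2)^ν J_{-ν}(z²/4) / 2` with Macdonald's integral
`J_μ(y) = ∫₀^∞ u^{μ-1} e^{-u-y/u} du`: the pair `(J_μ, J_{1-μ})` and the two pairs of power series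
behind `I_{±ν}` solve the same first order system, so every Wronskian is constant and can be read
off as `y → 0`.

The same argument evaluates `J_{1/2}(y) = √π e^{-2√y}`. Averaging `J_{1/2}(y/q)` against a beta
weight in `q ∈ (0,1)` produces every `J_{-ν}` with `ν > -1/2`, so `K_ν(z)` is `z^ν` times a positive
mixture of the exponentials `e^{-z/√q}`. At `z = 2πx²` these are Gaussians in `x`; hence the Fourier
transform of `|x|^{-2ν} K_ν(2πx²)` at `η` is a positive multiple of
`∫₀¹ q^{δ-1} (1-q)^{ε-1} e^{-πη²√q/2} dq`, where `δ = 1/4 - ν` and `ε = 1/2 + ν`. Positivity is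
clear. As `(1-q)^{ε-1}` increases and the exponential decreases, Chebyshev's integral inequality
decouples them, and the remaining gamma integral decays like `|η|^{-4δ}`.
-/

open scoped Topology Nat

/-- The regularized hypergeometric function `₀F₁(; a; w) / Γ(a) = ∑ wⁿ / (n! Γ(a + n))`, in terms of
which `I_ν(z) = (z / 2) ^ ν * zeroFOne (ν + 1) (z ^ 2 / 4)`. -/
noncomputable def zeroFOne (a w : ℂ) : ℂ :=
  Complex.regularizedHGFun 0 {a} w

lemma zeroFOne_hasSum (a w : ℂ) :
    HasSum (fun n : ℕ => w ^ n / (n ! * Complex.Gamma (a + n))) (zeroFOne a w) := by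
  have hradius : (Complex.regularizedHGFunSeries 0 {a}).radius = ⊤ :=
    Complex.radius_regularizedHGFunSeries_eq_top (by simp)
  have hsum := (Complex.regularizedHGFunSeries 0 {a}).hasSum (x := w) (by simp [hradius])
  refine hsum.congr_fun fun n => ?_
  simp [Complex.regularizedHGFunSeries, Complex.regularizedHGFunCoeff, div_eq_mul_inv]

lemma zeroFOne_zero_right (a : ℂ) : zeroFOne a 0 = (Complex.Gamma a)⁻¹ := by
  refine (zeroFOne_hasSum a 0).unique ?_
  simpa using hasSum_single (f := fun n : ℕ => (0 : ℂ) ^ n / (n ! * Complex.Gamma (a + n))) 0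
    fun n hn => by simp [hn]

lemma zeroFOne_hasDerivAt (a w : ℂ) : HasDerivAt (zeroFOne a) (zeroFOne (a + 1) w) w := by
  set term : ℕ → ℂ → ℂ := fun n w => w ^ n / (n ! * Complex.Gamma (a + n)) with hterm
  set R : ℝ := ‖w‖ + 1 with hR
  have hdiff : ∀ n, DifferentiableOn ℂ (term n) (Metric.ball 0 R) := fun n => by fun_prop
  have hbound : ∀ n, ∀ v ∈ Metric.ball (0 : ℂ) R, ‖term n v‖ ≤ ‖term n R‖ := fun n v hv => by
    have : ‖v‖ ≤ ‖(R : ℂ)‖ := by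
      simpa [abs_of_pos (show 0 < R by positivity)] using (mem_ball_zero_iff.1 hv).le
    simp only [hterm, norm_div, norm_pow]
    gcongr
  have hsummable : Summable fun n => ‖term n R‖ := (zeroFOne_hasSum a R).summable.norm
  have hmem : w ∈ Metric.ball (0 : ℂ) R := by simp [hR]
  have htsum : (fun v => ∑' n, term n v) = zeroFOne a :=
    funext fun v => (zeroFOne_hasSum a v).tsum_eq
  have hdifferentiable := Complex.differentiableOn_tsum_of_summable_norm hsummable hdiff
    Metric.isOpen_ball hbound
  have hderiv := Complex.hasSum_deriv_of_summable_norm hsummable hdiff Metric.isOpen_ball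
    hbound hmem
  rw [htsum] at hdifferentiable hderiv
  have hshift : HasSum (fun n => deriv (term (n + 1)) w) (zeroFOne (a + 1) w) := by
    refine (zeroFOne_hasSum (a + 1) w).congr_fun fun n => ?_
    have : (n : ℂ) + 1 ≠ 0 := n.cast_add_one_ne_zero
    rw [((hasDerivAt_pow (n + 1) w).div_const _).deriv, Nat.factorial_succ, Nat.add_sub_cancel]
    push_cast
    rw [show a + ((n : ℂ) + 1) = a + 1 + n by ring]
    field_simp
  have hzero : deriv (term 0) w = 0 := by simp [hterm]
  rw [← hasSum_nat_add_iff' 1, Finset.sum_range_one, hzero, sub_zero] at hderiv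
  rw [← hderiv.unique hshift]
  exact (hdifferentiable.differentiableAt (Metric.isOpen_ball.mem_nhds hmem)).hasDerivAt

lemma zeroFOne_contiguous (a w : ℂ) :
    a * zeroFOne (a + 1) w + w * zeroFOne (a + 2) w = zeroFOne a w := by
  have hshift : HasSum (fun n : ℕ => n * w ^ n / (n ! * Complex.Gamma (a + 1 + n)))
      (w * zeroFOne (a + 2) w) := by
    rw [← hasSum_nat_add_iff' 1]
    simp only [Finset.range_one, Finset.sum_singleton, Nat.cast_zero, zero_mul, zero_div, sub_zero]
    refine ((zeroFOne_hasSum (a + 2) w).mul_left w).congr_fun fun n => ?_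
    have : (n : ℂ) + 1 ≠ 0 := n.cast_add_one_ne_zero
    rw [Nat.factorial_succ]
    push_cast
    rw [show a + 1 + (n + 1 : ℂ) = a + 2 + n by ring]
    field_simp
    rw [pow_succ']
  refine (((zeroFOne_hasSum (a + 1) w).mul_left a).add hshift).unique ?_
  refine (zeroFOne_hasSum a w).congr_fun fun n => ?_
  have h := Complex.one_div_Gamma_eq_self_mul_one_div_Gamma_add_one (a + n)
  simp only [div_eq_mul_inv, mul_inv, h, add_right_comm a 1 (n : ℂ)]
  ring

lemma zeroFOne_cpow_mul_hasDerivAt (a : ℂ) {y : ℝ} (hy : 0 < y) :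
    HasDerivAt (fun y : ℝ => (y : ℂ) ^ a * zeroFOne (a + 1) y)
      ((y : ℂ) ^ (a - 1) * zeroFOne a y) y := by
  have hy₀ : (y : ℂ) ≠ 0 := by exact_mod_cast hy.ne'
  have hpow : HasDerivAt (fun w : ℂ => w ^ a) (a * (y : ℂ) ^ (a - 1)) (y : ℂ) := by
    simpa using (hasDerivAt_id (y : ℂ)).cpow_const (c := a) (by simp [hy])
  convert! (hpow.mul (zeroFOne_hasDerivAt (a + 1) y)).comp_ofReal using 1
  rw [← zeroFOne_contiguous, Complex.cpow_sub _ _ hy₀, Complex.cpow_one,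
    show a + 2 = a + 1 + 1 by ring]
  field_simp

lemma norm_inv_Gamma_add_natCast_le {a : ℂ} {r : ℝ} (hr : 0 < r) (ha : r ≤ a.re) (n : ℕ) :
    ‖(Complex.Gamma (a + n))⁻¹‖ ≤ ‖(Complex.Gamma a)⁻¹‖ * r⁻¹ ^ n := by
  induction n with
  | zero => simp
  | succ n ih =>
    have hre : r ≤ ‖a + n‖ := calc
      r ≤ (a + n).re := by
        rw [Complex.add_re, Complex.natCast_re]
        linarith [n.cast_nonneg (α := ℝ)]
      _ ≤ ‖a + n‖ := Complex.re_le_norm _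
    have hrec : ‖(Complex.Gamma (a + n))⁻¹‖
        = ‖a + n‖ * ‖(Complex.Gamma (a + (n + 1 : ℕ)))⁻¹‖ := by
      rw [← norm_mul, Complex.one_div_Gamma_eq_self_mul_one_div_Gamma_add_one (a + n),
        Nat.cast_succ, add_assoc]
    rw [pow_succ, ← mul_assoc, ← div_eq_mul_inv, le_div_iff₀ hr, mul_comm]
    calc r * ‖(Complex.Gamma (a + (n + 1 : ℕ)))⁻¹‖
        ≤ ‖a + n‖ * ‖(Complex.Gamma (a + (n + 1 : ℕ)))⁻¹‖ := by gcongr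
      _ ≤ ‖(Complex.Gamma a)⁻¹‖ * r⁻¹ ^ n := hrec ▸ ih

lemma zeroFOne_differentiableAt_left {a : ℂ} (ha : 0 < a.re) (w : ℂ) :
    DifferentiableAt ℂ (fun a => zeroFOne a w) a := by
  have hGamma := Complex.differentiable_one_div_Gamma
  set r := a.re / 2
  set M := ‖(Complex.Gamma a)⁻¹‖ + 1
  set U : Set ℂ := {b | r < b.re ∧ ‖(Complex.Gamma b)⁻¹‖ < M}
  have hr_pos : 0 < r := half_pos ha
  have hopen : IsOpen U := (isOpen_lt continuous_const Complex.continuous_re).inter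
    (isOpen_lt hGamma.continuous.norm continuous_const)
  have hmem : a ∈ U := ⟨half_lt_self ha, lt_add_one _⟩
  have htsum : (fun a => zeroFOne a w) =
      fun b => ∑' n : ℕ, w ^ n * ((n ! : ℂ)⁻¹ * (Complex.Gamma (b + n))⁻¹) := by
    ext b
    simp_rw [← mul_inv, ← div_eq_mul_inv, (zeroFOne_hasSum b w).tsum_eq]
  rw [htsum]
  refine (Complex.differentiableOn_tsum_of_summable_norm
    (u := fun n : ℕ => M * ((‖w‖ * r⁻¹) ^ n / n !))
    ((Real.summable_pow_div_factorial _).mul_left M) (fun n => ?_) hopen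
    fun n b hb => ?_).differentiableAt (hopen.mem_nhds hmem)
  · have hshift : Differentiable ℂ fun b => (Complex.Gamma (b + n))⁻¹ :=
      hGamma.comp (differentiable_id.add_const (n : ℂ))
    exact ((hshift.const_mul _).const_mul _).differentiableOn
  · rw [norm_mul, norm_mul, norm_pow, norm_inv, Complex.norm_natCast]
    calc ‖w‖ ^ n * ((n ! : ℝ)⁻¹ * ‖(Complex.Gamma (b + n))⁻¹‖)
        ≤ ‖w‖ ^ n * ((n ! : ℝ)⁻¹ * (M * r⁻¹ ^ n)) := by
          gcongr
          refine (norm_inv_Gamma_add_natCast_le hr_pos hb.1.le n).trans ?_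
          gcongr
          exact hb.2.le
      _ = M * ((‖w‖ * r⁻¹) ^ n / n !) := by ring

lemma besselI_eq_zeroFOne (ν : ℂ) {z : ℝ} (hz : 0 < z) :
    besselI ν z = ((z / 2 : ℝ) : ℂ) ^ ν * zeroFOne (ν + 1) ((z ^ 2 / 4 : ℝ) : ℂ) := by
  have hz₀ : ((z / 2 : ℝ) : ℂ) ≠ 0 := by exact_mod_cast (half_pos hz).ne'
  rw [besselI, ← (zeroFOne_hasSum _ _).tsum_eq, ← tsum_mul_left]
  refine tsum_congr fun n => ?_
  have hpow : ((z / 2 : ℝ) : ℂ) ^ (2 * n : ℂ) = ((z ^ 2 / 4 : ℝ) : ℂ) ^ n := by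
    rw [show (2 * n : ℂ) = (2 * n : ℕ) by push_cast; rfl, Complex.cpow_natCast, pow_mul]
    congr 1
    push_cast
    ring
  rw [← mul_div_assoc, ← hpow, ← Complex.cpow_add _ _ hz₀, show (n : ℂ) + ν + 1 = ν + 1 + n by ring,
    Complex.ofReal_div, Complex.ofReal_ofNat]

/-- The weight of Macdonald's integral. -/
noncomputable def macdonaldWeight (y u : ℝ) : ℂ :=
  (Real.exp (-u - y / u) : ℝ)

/-- Macdonald's integral `J_μ(y) = ∫₀^∞ u ^ (μ - 1) * exp (-u - y / u) du`, normalized so that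
`K_ν(z) = (z / 2) ^ ν * J_{-ν}(z ^ 2 / 4) / 2`. -/
noncomputable def macdonaldIntegral (μ : ℂ) (y : ℝ) : ℂ :=
  mellin (macdonaldWeight y) μ

lemma norm_macdonaldWeight (y u : ℝ) : ‖macdonaldWeight y u‖ = Real.exp (-u - y / u) := by
  rw [macdonaldWeight, Complex.norm_real, Real.norm_of_nonneg (Real.exp_pos _).le]

lemma macdonaldWeight_locallyIntegrableOn (y : ℝ) :
    LocallyIntegrableOn (macdonaldWeight y) (Ioi 0) := by
  refine ContinuousOn.locallyIntegrableOn ?_ measurableSet_Ioi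
  refine Complex.continuous_ofReal.comp_continuousOn (Real.continuous_exp.comp_continuousOn ?_)
  exact continuousOn_id.neg.sub (continuousOn_const.div continuousOn_id fun u hu => ne_of_gt hu)

lemma macdonaldWeight_isBigO_atTop {y : ℝ} (hy : 0 ≤ y) (a : ℝ) :
    macdonaldWeight y =O[atTop] fun u : ℝ => u ^ (-a) := by
  have hexp : macdonaldWeight y =O[atTop] fun u : ℝ => Real.exp (-(1 : ℝ) * u) := by
    refine Asymptotics.IsBigO.of_bound 1 ?_
    filter_upwards [eventually_gt_atTop 0] with u hu
    rw [norm_macdonaldWeight, Real.norm_of_nonneg (Real.exp_pos _).le, one_mul, Real.exp_le_exp]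
    have : 0 ≤ y / u := by positivity
    linarith
  exact hexp.trans (isLittleO_exp_neg_mul_rpow_atTop one_pos _).isBigO

lemma macdonaldWeight_isBigO_nhdsGT_zero {y : ℝ} (hy : 0 < y) (b : ℝ) :
    macdonaldWeight y =O[𝓝[>] 0] fun u : ℝ => u ^ (-b) := by
  have hexp : macdonaldWeight y =O[𝓝[>] 0] fun u : ℝ => Real.exp (-y * u⁻¹) := by
    refine Asymptotics.IsBigO.of_bound 1 ?_
    filter_upwards [self_mem_nhdsWithin] with u (hu : 0 < u)
    rw [norm_macdonaldWeight, Real.norm_of_nonneg (Real.exp_pos _).le, one_mul, Real.exp_le_exp,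
      div_eq_mul_inv]
    linarith
  have hinv := (isLittleO_exp_neg_mul_rpow_atTop hy b).isBigO.comp_tendsto
    tendsto_inv_nhdsGT_zero
  refine (hexp.trans hinv).congr' EventuallyEq.rfl ?_
  filter_upwards [self_mem_nhdsWithin] with u (hu : 0 < u)
  simp [Real.inv_rpow hu.le, Real.rpow_neg hu.le]

lemma macdonaldIntegral_convergent {y : ℝ} (hy : 0 < y) (μ : ℂ) :
    MellinConvergent (macdonaldWeight y) μ :=
  mellinConvergent_of_isBigO_rpow (macdonaldWeight_locallyIntegrableOn y)
    (macdonaldWeight_isBigO_atTop hy.le (μ.re + 1)) (by linarith)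
    (macdonaldWeight_isBigO_nhdsGT_zero hy (μ.re - 1)) (by linarith)

lemma macdonaldIntegral_differentiable {y : ℝ} (hy : 0 < y) :
    Differentiable ℂ fun μ => macdonaldIntegral μ y := fun μ =>
  mellin_differentiableAt_of_isBigO_rpow (macdonaldWeight_locallyIntegrableOn y)
    (macdonaldWeight_isBigO_atTop hy.le (μ.re + 1)) (by linarith)
    (macdonaldWeight_isBigO_nhdsGT_zero hy (μ.re - 1)) (by linarith)

lemma macdonaldIntegral_ofReal (μ y : ℝ) :
    macdonaldIntegral μ y = (∫ u in Ioi 0, u ^ (μ - 1) * Real.exp (-u - y / u) : ℝ) := by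
  rw [macdonaldIntegral, mellin, ← integral_complex_ofReal]
  refine setIntegral_congr_fun measurableSet_Ioi fun u (hu : 0 < u) => ?_
  simp only [macdonaldWeight, smul_eq_mul]
  rw [← Complex.ofReal_one, ← Complex.ofReal_sub, ← Complex.ofReal_cpow hu.le, Complex.ofReal_mul]

lemma macdonaldIntegral_neg {y : ℝ} (hy : 0 < y) (μ : ℂ) :
    macdonaldIntegral (-μ) y = (y : ℂ) ^ (-μ) * macdonaldIntegral μ y := by
  rw [macdonaldIntegral, ← mellin_comp_inv, macdonaldIntegral, ← smul_eq_mul,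
    ← mellin_comp_mul_left _ _ hy]
  refine setIntegral_congr_fun measurableSet_Ioi fun u (hu : 0 < u) => ?_
  simp only [macdonaldWeight]
  congr 3
  field_simp
  ring

lemma macdonaldIntegral_hasDerivAt {y : ℝ} (hy : 0 < y) (μ : ℂ) :
    HasDerivAt (macdonaldIntegral μ) (-macdonaldIntegral (μ - 1) y) y := by
  rw [macdonaldIntegral, mellin, ← integral_neg]
  refine (hasDerivAt_integral_of_dominated_loc_of_deriv_le (s := Ioi (y / 2))
    (F := fun (x u : ℝ) => (u : ℂ) ^ (μ - 1) • macdonaldWeight x u)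
    (F' := fun (x u : ℝ) => -((u : ℂ) ^ (μ - 1 - 1) • macdonaldWeight x u))
    (bound := fun u : ℝ => ‖(u : ℂ) ^ (μ - 1 - 1) • macdonaldWeight (y / 2) u‖)
    (Ioi_mem_nhds (by linarith)) ?_ (macdonaldIntegral_convergent hy μ) ?_ ?_
    (macdonaldIntegral_convergent (half_pos hy) (μ - 1)).norm ?_).2
  · filter_upwards [Ioi_mem_nhds hy] with x hx
    exact (macdonaldIntegral_convergent hx μ).aestronglyMeasurable
  · exact (macdonaldIntegral_convergent hy (μ - 1)).neg.aestronglyMeasurable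
  · filter_upwards [ae_restrict_mem measurableSet_Ioi] with u (hu : 0 < u) x (hx : y / 2 < x)
    rw [norm_neg, norm_smul, norm_smul, norm_macdonaldWeight, norm_macdonaldWeight]
    gcongr
  · filter_upwards [ae_restrict_mem measurableSet_Ioi] with u (hu : 0 < u) x _
    have hu₀ : (u : ℂ) ≠ 0 := by exact_mod_cast hu.ne'
    have hexp : HasDerivAt (fun x : ℝ => Real.exp (-u - x / u))
        (Real.exp (-u - x / u) * -(1 / u)) x :=
      (((hasDerivAt_id x).div_const u).const_sub (-u)).exp
    convert! hexp.ofReal_comp.const_smul ((u : ℂ) ^ (μ - 1)) using 1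
    rw [Complex.cpow_sub _ _ hu₀, Complex.cpow_one, macdonaldWeight, smul_eq_mul, smul_eq_mul]
    push_cast
    field_simp

lemma macdonaldIntegral_tendsto_Gamma {μ : ℂ} (hμ : 0 < μ.re) :
    Tendsto (macdonaldIntegral μ) (𝓝[>] 0) (𝓝 (Complex.Gamma μ)) := by
  rw [Complex.Gamma_eq_integral hμ, Complex.GammaIntegral]
  refine tendsto_integral_filter_of_dominated_convergence
    (fun u : ℝ => ‖(Real.exp (-u) : ℂ) * (u : ℂ) ^ (μ - 1)‖) ?_ ?_
    (Complex.GammaIntegral_convergent hμ).norm ?_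
  · filter_upwards [self_mem_nhdsWithin] with y hy
    exact (macdonaldIntegral_convergent hy μ).aestronglyMeasurable
  · filter_upwards [self_mem_nhdsWithin] with y (hy : 0 < y)
    filter_upwards [ae_restrict_mem measurableSet_Ioi] with u (hu : 0 < u)
    rw [norm_smul, norm_mul, norm_macdonaldWeight, mul_comm, Complex.norm_real,
      Real.norm_of_nonneg (Real.exp_pos _).le]
    gcongr
    have : 0 < y / u := by positivity
    linarith
  · refine Eventually.of_forall fun u => ?_
    have hcont : Continuous fun y : ℝ => (u : ℂ) ^ (μ - 1) • macdonaldWeight y u := by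
      unfold macdonaldWeight
      fun_prop
    convert! (hcont.tendsto 0).mono_left nhdsWithin_le_nhds using 2
    simp [macdonaldWeight, mul_comm]

/-- `f` and `g` solve the first order system `f' = -y ^ (μ - 1) * g`, `g' = -y ^ (-μ) * f` on
`(0, ∞)` and have the limits `a` and `b` at `0`. In the variable `z = 2√y` this system is the
modified Bessel equation of order `μ` for `z ^ (-μ) * f`. -/
structure IsBesselPair (μ : ℂ) (f g : ℝ → ℂ) (a b : ℂ) : Prop where
  hasDerivAt_fst : ∀ y : ℝ, 0 < y → HasDerivAt f (-((y : ℂ) ^ (μ - 1) * g y)) y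
  hasDerivAt_snd : ∀ y : ℝ, 0 < y → HasDerivAt g (-((y : ℂ) ^ (-μ) * f y)) y
  tendsto_fst : Tendsto f (𝓝[>] 0) (𝓝 a)
  tendsto_snd : Tendsto g (𝓝[>] 0) (𝓝 b)

namespace IsBesselPair

lemma swap {μ : ℂ} {f g : ℝ → ℂ} {a b : ℂ} (h : IsBesselPair μ f g a b) :
    IsBesselPair (1 - μ) g f b a where
  hasDerivAt_fst y hy := by simpa using h.hasDerivAt_snd y hy
  hasDerivAt_snd y hy := by simpa using h.hasDerivAt_fst y hy
  tendsto_fst := h.tendsto_snd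
  tendsto_snd := h.tendsto_fst

lemma wronskian_eq {μ : ℂ} {f₁ g₁ f₂ g₂ : ℝ → ℂ} {a₁ b₁ a₂ b₂ : ℂ}
    (h₁ : IsBesselPair μ f₁ g₁ a₁ b₁) (h₂ : IsBesselPair μ f₂ g₂ a₂ b₂) {y : ℝ} (hy : 0 < y) :
    f₁ y * g₂ y - f₂ y * g₁ y = a₁ * b₂ - a₂ * b₁ := by
  set W : ℝ → ℂ := fun y => f₁ y * g₂ y - f₂ y * g₁ y
  have hderiv : ∀ x : ℝ, 0 < x → HasDerivAt W 0 x := fun x hx => by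
    convert! ((h₁.hasDerivAt_fst x hx).mul (h₂.hasDerivAt_snd x hx)).sub
      ((h₂.hasDerivAt_fst x hx).mul (h₁.hasDerivAt_snd x hx)) using 1
    ring
  have hconst : ∀ x : ℝ, 0 < x → W y = W x := fun x hx =>
    isOpen_Ioi.is_const_of_deriv_eq_zero isPreconnected_Ioi
      (fun u hu => (hderiv u hu).differentiableAt.differentiableWithinAt)
      (fun u hu => (hderiv u hu).deriv) hy hx
  have hlim : Tendsto W (𝓝[>] 0) (𝓝 (a₁ * b₂ - a₂ * b₁)) :=
    (h₁.tendsto_fst.mul h₂.tendsto_snd).sub (h₂.tendsto_fst.mul h₁.tendsto_snd)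
  refine tendsto_nhds_unique (tendsto_const_nhds.congr' ?_) hlim
  filter_upwards [self_mem_nhdsWithin] with x hx using hconst x hx

end IsBesselPair

lemma isBesselPair_macdonaldIntegral {μ : ℂ} (h₀ : 0 < μ.re) (h₁ : μ.re < 1) :
    IsBesselPair μ (macdonaldIntegral μ) (macdonaldIntegral (1 - μ))
      (Complex.Gamma μ) (Complex.Gamma (1 - μ)) where
  hasDerivAt_fst y hy := by
    convert! macdonaldIntegral_hasDerivAt hy μ using 2
    rw [← neg_sub 1 μ, macdonaldIntegral_neg hy]
  hasDerivAt_snd y hy := by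
    convert! macdonaldIntegral_hasDerivAt hy (1 - μ) using 2
    rw [← macdonaldIntegral_neg hy, sub_sub_cancel_left]
  tendsto_fst := macdonaldIntegral_tendsto_Gamma h₀
  tendsto_snd := macdonaldIntegral_tendsto_Gamma (by simpa using h₁)

lemma isBesselPair_zeroFOne {μ : ℂ} (hμ : 0 < μ.re) :
    IsBesselPair μ (fun y => (y : ℂ) ^ μ * zeroFOne (μ + 1) y) (fun y => -zeroFOne μ y)
      0 (-(Complex.Gamma μ)⁻¹) where
  hasDerivAt_fst y hy := by simpa using zeroFOne_cpow_mul_hasDerivAt μ hy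
  hasDerivAt_snd y hy := by
    have hy₀ : (y : ℂ) ≠ 0 := by exact_mod_cast hy.ne'
    rw [← mul_assoc, ← Complex.cpow_add _ _ hy₀, neg_add_cancel, Complex.cpow_zero, one_mul]
    exact (zeroFOne_hasDerivAt μ y).comp_ofReal.neg
  tendsto_fst := by
    have hpow : Tendsto (fun y : ℝ => (y : ℂ) ^ μ) (𝓝 0) (𝓝 0) := by
      have hμ₀ : μ ≠ 0 := by
        rintro rfl
        exact hμ.false
      simpa [hμ₀] using (Complex.continuousAt_ofReal_cpow_const 0 μ (Or.inl hμ)).tendsto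
    simpa using (hpow.mul (zeroFOne_hasDerivAt (μ + 1) (0 : ℝ)).comp_ofReal.continuousAt.tendsto
      ).mono_left nhdsWithin_le_nhds
  tendsto_snd := by
    simpa [zeroFOne_zero_right] using (zeroFOne_hasDerivAt μ (0 : ℝ)).comp_ofReal.continuousAt
      |>.tendsto.mono_left nhdsWithin_le_nhds

lemma sin_mul_macdonaldIntegral_of_re_mem_Ioo {μ : ℂ} (h₀ : 0 < μ.re) (h₁ : μ.re < 1) {y : ℝ}
    (hy : 0 < y) :
    Complex.sin (π * μ) * macdonaldIntegral μ y =
      π * (zeroFOne (1 - μ) y - (y : ℂ) ^ μ * zeroFOne (μ + 1) y) := by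
  have h₁' : 0 < (1 - μ).re := by simpa using h₁
  have hJ := isBesselPair_macdonaldIntegral h₀ h₁
  have hΦ := isBesselPair_zeroFOne h₀
  have hΨ := (isBesselPair_zeroFOne h₁').swap
  rw [sub_sub_cancel] at hΨ
  have hΓ : Complex.Gamma μ * (Complex.Gamma μ)⁻¹ = 1 :=
    mul_inv_cancel₀ (Complex.Gamma_ne_zero_of_re_pos h₀)
  have hΓ' : Complex.Gamma (1 - μ) * (Complex.Gamma (1 - μ))⁻¹ = 1 :=
    mul_inv_cancel₀ (Complex.Gamma_ne_zero_of_re_pos h₁')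
  have hsin : Complex.sin (π * μ) = π * ((Complex.Gamma μ)⁻¹ * (Complex.Gamma (1 - μ))⁻¹) := by
    rw [← mul_inv, Complex.Gamma_mul_Gamma_one_sub, inv_div, mul_div_cancel₀]
    exact_mod_cast Real.pi_ne_zero
  have hJΦ := hJ.wronskian_eq hΦ hy
  have hJΨ := hJ.wronskian_eq hΨ hy
  have hΦΨ := hΦ.wronskian_eq hΨ hy
  rw [hsin]
  -- Cramer's rule: the three Wronskians determine `J_μ` as a combination of the two power series.
  linear_combination π * macdonaldIntegral μ y * hΦΨ
    - π * (y : ℂ) ^ μ * zeroFOne (μ + 1) y * (hJΨ + hΓ') - π * zeroFOne (1 - μ) y * (hJΦ - hΓ)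

lemma sin_mul_macdonaldIntegral {μ : ℂ} (hμ : |μ.re| < 1) {y : ℝ} (hy : 0 < y) :
    Complex.sin (π * μ) * macdonaldIntegral μ y =
      π * (zeroFOne (1 - μ) y - (y : ℂ) ^ μ * zeroFOne (μ + 1) y) := by
  have hy₀ : (y : ℂ) ≠ 0 := by exact_mod_cast hy.ne'
  set S : Set ℂ := {μ | |μ.re| < 1} with hS
  have hopen : IsOpen S := isOpen_lt Complex.continuous_re.abs continuous_const
  have hconvex : Convex ℝ S := by
    have : S = Complex.reLm ⁻¹' Ioo (-1) 1 := by ext; simp [hS, abs_lt]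
    exact this ▸ (convex_Ioo (-1) 1).linear_preimage _
  have hleft : DifferentiableOn ℂ (fun μ => Complex.sin (π * μ) * macdonaldIntegral μ y) S :=
    ((Complex.differentiable_sin.comp (differentiable_id.const_mul _)).mul
      (macdonaldIntegral_differentiable hy)).differentiableOn
  have hright : DifferentiableOn ℂ
      (fun μ => π * (zeroFOne (1 - μ) y - (y : ℂ) ^ μ * zeroFOne (μ + 1) y)) S := fun μ hμ => by
    obtain ⟨h₀, h₁⟩ := abs_lt.1 (show |μ.re| < 1 from hμ)
    have h₁ : DifferentiableAt ℂ (fun μ => zeroFOne (1 - μ) y) μ :=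
      (zeroFOne_differentiableAt_left (by rw [Complex.sub_re, Complex.one_re]; linarith) y).comp μ
        (differentiableAt_id.const_sub 1)
    have h₂ : DifferentiableAt ℂ (fun μ => zeroFOne (μ + 1) y) μ :=
      (zeroFOne_differentiableAt_left (by rw [Complex.add_re, Complex.one_re]; linarith) y).comp μ
        (differentiableAt_id.add_const 1)
    exact ((h₁.sub ((differentiableAt_id.const_cpow (Or.inl hy₀)).mul h₂)).const_mul
      _).differentiableWithinAt
  refine (hleft.analyticOnNhd hopen).eqOn_of_preconnected_of_eventuallyEq
    (hright.analyticOnNhd hopen) hconvex.isPreconnected (z₀ := 1 / 2) ?_ ?_ hμ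
  · norm_num [hS, abs_lt]
  · have h₀ : ∀ᶠ μ : ℂ in 𝓝 (1 / 2), 0 < μ.re :=
      Complex.continuous_re.continuousAt.eventually (lt_mem_nhds (by norm_num))
    have h₁ : ∀ᶠ μ : ℂ in 𝓝 (1 / 2), μ.re < 1 :=
      Complex.continuous_re.continuousAt.eventually (gt_mem_nhds (by norm_num))
    filter_upwards [h₀, h₁] with μ h₀ h₁ using sin_mul_macdonaldIntegral_of_re_mem_Ioo h₀ h₁ hy

lemma besselI_neg_sub_besselI {ν : ℂ} (hν : |ν.re| < 1) {z : ℝ} (hz : 0 < z) :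
    π * (besselI (-ν) z - besselI ν z) =
      Complex.sin (ν * π) * (((z / 2 : ℝ) : ℂ) ^ ν * macdonaldIntegral (-ν) (z ^ 2 / 4)) := by
  have hconnection := sin_mul_macdonaldIntegral (μ := -ν) (by simpa using hν)
    (show 0 < z ^ 2 / 4 by positivity)
  have hpow : ((z / 2 : ℝ) : ℂ) ^ ν * ((z ^ 2 / 4 : ℝ) : ℂ) ^ (-ν) = ((z / 2 : ℝ) : ℂ) ^ (-ν) := by
    have hz₀ : ((z / 2 : ℝ) : ℂ) ≠ 0 := by exact_mod_cast (half_pos hz).ne'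
    rw [show z ^ 2 / 4 = z / 2 * (z / 2) by ring, Complex.ofReal_mul,
      Complex.mul_cpow_ofReal_nonneg (half_pos hz).le (half_pos hz).le, ← mul_assoc,
      ← Complex.cpow_add _ _ hz₀, add_neg_cancel, Complex.cpow_zero, one_mul]
  rw [mul_neg, Complex.sin_neg, sub_neg_eq_add, add_comm 1 ν, mul_comm (π : ℂ) ν] at hconnection
  rw [besselI_eq_zeroFOne _ hz, besselI_eq_zeroFOne _ hz, ← hpow]
  linear_combination ((z / 2 : ℝ) : ℂ) ^ ν * hconnection

theorem besselK_eq_macdonaldIntegral {ν : ℂ} (hν : |ν.re| < 1) {z : ℝ} (hz : 0 < z) :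
    besselK ν z = 1 / 2 * ((z / 2 : ℝ) : ℂ) ^ ν * macdonaldIntegral (-ν) (z ^ 2 / 4) := by
  set F : ℂ → ℂ := fun ν => 1 / 2 * ((z / 2 : ℝ) : ℂ) ^ ν * macdonaldIntegral (-ν) (z ^ 2 / 4)
    with hF
  have hπ : (π : ℂ) ≠ 0 := by exact_mod_cast Real.pi_ne_zero
  have hnonint : ∀ {μ : ℂ}, |μ.re| < 1 → μ ≠ 0 → ∀ n : ℤ, μ ≠ n := by
    rintro μ hμ hμ₀ n rfl
    have hn : |n| < 1 := by exact_mod_cast hμ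
    exact hμ₀ (by rw [Int.abs_lt_one_iff.1 hn, Int.cast_zero])
  have hformula : ∀ {μ : ℂ}, |μ.re| < 1 → μ ≠ 0 →
      π / (2 * Complex.sin (μ * π)) * (besselI (-μ) z - besselI μ z) = F μ := by
    intro μ hμ hμ₀
    have hsin : Complex.sin (μ * π) ≠ 0 := Complex.sin_ne_zero_iff.2 fun n hn =>
      hnonint hμ hμ₀ n (mul_right_cancel₀ hπ hn)
    rw [div_mul_eq_mul_div, besselI_neg_sub_besselI hμ hz, hF]
    field_simp
  by_cases hν₀ : ν = 0
  · subst hν₀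
    have hz₀ : ((z / 2 : ℝ) : ℂ) ≠ 0 := by exact_mod_cast (half_pos hz).ne'
    have hcont : Continuous F := by
      have hJ := (macdonaldIntegral_differentiable (show 0 < z ^ 2 / 4 by positivity)).continuous
      exact (continuous_const.mul (continuous_id.const_cpow (Or.inl hz₀))).mul
        (hJ.comp continuous_neg)
    have hnear : ∀ᶠ μ : ℂ in 𝓝[≠] 0, |μ.re| < 1 := nhdsWithin_le_nhds <|
      Complex.continuous_re.abs.continuousAt.eventually (gt_mem_nhds (by simp))
    rw [besselK, if_pos ⟨0, by simp⟩]
    refine Tendsto.limUnder_eq (Tendsto.congr' ?_ ((hcont.tendsto 0).mono_left nhdsWithin_le_nhds))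
    filter_upwards [hnear, self_mem_nhdsWithin] with μ hμ hμ₀ using (hformula hμ hμ₀).symm
  · rw [besselK, if_neg fun ⟨n, hn⟩ => hnonint hν hν₀ n hn]
    exact hformula hν hν₀

lemma integral_integral_swap_of_nonneg {α β : Type*} [MeasurableSpace α] [MeasurableSpace β]
    {μ : Measure α} {ν : Measure β} [SFinite μ] [SFinite ν] {F : α → β → ℝ}
    (hmeas : AEStronglyMeasurable (Function.uncurry F) (μ.prod ν))
    (hnonneg : ∀ᵐ y ∂ν, ∀ᵐ x ∂μ, 0 ≤ F x y) (hinner : ∀ᵐ y ∂ν, Integrable (F · y) μ)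
    (houter : Integrable (fun y => ∫ x, F x y ∂μ) ν) :
    ∫ x, ∫ y, F x y ∂ν ∂μ = ∫ y, ∫ x, F x y ∂μ ∂ν := by
  refine integral_integral_swap ((integrable_prod_iff' hmeas).2 ⟨hinner, houter.congr ?_⟩)
  filter_upwards [hnonneg] with y hy
  exact integral_congr_ae (hy.mono fun x hx => (Real.norm_of_nonneg hx).symm)

lemma isBesselPair_exp_two_mul_sqrt :
    IsBesselPair (1 / 2) (fun y => (Real.exp (2 * √y) : ℝ)) (fun y => -(Real.exp (2 * √y) : ℝ))
      1 (-1) := by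
  have hpow : ∀ y : ℝ, 0 < y → (y : ℂ) ^ (-(1 / 2) : ℂ) = ((√y)⁻¹ : ℝ) := fun y hy => by
    rw [Real.sqrt_eq_rpow, ← Real.rpow_neg hy.le, Complex.ofReal_cpow hy.le]
    norm_num
  have hderiv : ∀ y : ℝ, 0 < y → HasDerivAt (fun y : ℝ => ((Real.exp (2 * √y) : ℝ) : ℂ))
      ((y : ℂ) ^ (-(1 / 2) : ℂ) * (Real.exp (2 * √y) : ℝ)) y := fun y hy => by
    rw [hpow y hy]
    convert! (((hasDerivAt_id y).sqrt hy.ne').const_mul 2).exp.ofReal_comp using 1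
    push_cast
    field_simp
    simp [mul_comm]
  have hlim : Tendsto (fun y : ℝ => ((Real.exp (2 * √y) : ℝ) : ℂ)) (𝓝[>] 0) (𝓝 1) := by
    have hcont : Continuous fun y : ℝ => ((Real.exp (2 * √y) : ℝ) : ℂ) := by fun_prop
    simpa using (hcont.tendsto 0).mono_left nhdsWithin_le_nhds
  exact
    { hasDerivAt_fst := fun y hy => by
        convert! hderiv y hy using 1
        norm_num
      hasDerivAt_snd := fun y hy => (hderiv y hy).neg
      tendsto_fst := hlim
      tendsto_snd := hlim.neg }

lemma macdonaldIntegral_one_half {y : ℝ} (hy : 0 < y) :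
    macdonaldIntegral (1 / 2) y = (√π * Real.exp (-2 * √y) : ℝ) := by
  have hJ := isBesselPair_macdonaldIntegral (μ := 1 / 2) (by norm_num) (by norm_num)
  have hW := hJ.wronskian_eq isBesselPair_exp_two_mul_sqrt hy
  have hΓ : Complex.Gamma (1 / 2) = (√π : ℝ) := by
    rw [← Real.Gamma_one_half_eq, ← Complex.Gamma_ofReal]
    norm_num
  rw [sub_half, hΓ] at hW
  rw [neg_mul, Real.exp_neg, Complex.ofReal_mul, Complex.ofReal_inv, ← div_eq_mul_inv,
    eq_div_iff (by exact_mod_cast (Real.exp_pos _).ne')]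
  linear_combination -hW / 2

lemma rpow_mul_one_sub_rpow_mul_exp_neg_div_inv_one_add (α r : ℝ) {w : ℝ} (hw : 0 < w) :
    |-1 / (1 + w) ^ 2| • (((1 + w)⁻¹) ^ (-α - 1) * (1 - (1 + w)⁻¹) ^ (α - 1) *
      Real.exp (-r / (1 + w)⁻¹)) = Real.exp (-r) * (w ^ (α - 1) * Real.exp (-(r * w))) := by
  have h1w : 0 < 1 + w := by positivity
  have hsub : 1 - (1 + w)⁻¹ = w * (1 + w)⁻¹ := by field_simp; ring
  have hpow : (1 + w) ^ (α + 1) = (1 + w) ^ (α - 1) * (1 + w) ^ 2 := by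
    rw [← Real.rpow_add_natCast h1w.ne', Nat.cast_ofNat]
    ring_nf
  rw [hsub, Real.mul_rpow hw.le (by positivity), Real.inv_rpow h1w.le, Real.inv_rpow h1w.le,
    ← Real.rpow_neg h1w.le, show -(-α - 1) = α + 1 by ring, hpow, neg_div, abs_neg,
    abs_of_pos (by positivity), div_inv_eq_mul, show -r * (1 + w) = -r + -(r * w) by ring,
    Real.exp_add, smul_eq_mul]
  field_simp

lemma integral_rpow_mul_one_sub_rpow_mul_exp_neg_div {α r : ℝ} (hα : 0 < α) (hr : 0 < r) :
    ∫ q in Ioo (0 : ℝ) 1, q ^ (-α - 1) * (1 - q) ^ (α - 1) * Real.exp (-r / q) =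
      Real.Gamma α * r ^ (-α) * Real.exp (-r) := by
  have himage : (fun w : ℝ => (1 + w)⁻¹) '' Ioi 0 = Ioo 0 1 := by
    ext q
    constructor
    · rintro ⟨w, hw : 0 < w, rfl⟩
      exact ⟨by positivity, inv_lt_one_of_one_lt₀ (by linarith)⟩
    · rintro ⟨hq₀, hq₁⟩
      exact ⟨q⁻¹ - 1, sub_pos.2 ((one_lt_inv₀ hq₀).2 hq₁), by simp⟩
  have hderiv : ∀ w ∈ Ioi (0 : ℝ),
      HasDerivWithinAt (fun w : ℝ => (1 + w)⁻¹) (-1 / (1 + w) ^ 2) (Ioi 0) w :=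
    fun w (hw : 0 < w) =>
      (((hasDerivAt_id w).const_add 1).fun_inv (by positivity)).hasDerivWithinAt
  have hinj : InjOn (fun w : ℝ => (1 + w)⁻¹) (Ioi 0) := fun w _ w' _ h =>
    add_left_cancel (inv_injective h)
  rw [← himage, integral_image_eq_integral_abs_deriv_smul measurableSet_Ioi hderiv hinj]
  rw [setIntegral_congr_fun measurableSet_Ioi
      fun w hw => rpow_mul_one_sub_rpow_mul_exp_neg_div_inv_one_add α r hw,
    integral_const_mul, Real.integral_rpow_mul_exp_neg_mul_Ioi hα hr, one_div, Real.inv_rpow hr.le,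
    Real.rpow_neg hr.le]
  ring

lemma integrableOn_rpow_mul_exp_neg_sub_div (μ : ℝ) {y : ℝ} (hy : 0 < y) :
    IntegrableOn (fun u : ℝ => u ^ (μ - 1) * Real.exp (-u - y / u)) (Ioi 0) := by
  refine IntegrableOn.congr_fun (macdonaldIntegral_convergent hy μ).norm
    (fun u (hu : 0 < u) => ?_) measurableSet_Ioi
  simp [norm_macdonaldWeight, Complex.norm_cpow_eq_rpow_re_of_pos hu]

lemma sqrt_pi_mul_exp_neg_two_mul_sqrt_div {y q : ℝ} (hy : 0 < y) (hq : 0 < q) :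
    √π * Real.exp (-2 * √(y / q)) =
      ∫ r in Ioi 0, q ^ (-(1 / 2) : ℝ) * r ^ (-(1 / 2) : ℝ) * Real.exp (-r / q - y / r) := by
  have hJ : √π * Real.exp (-2 * √(y / q)) =
      ∫ u in Ioi 0, u ^ (-(1 / 2) : ℝ) * Real.exp (-u - y / q / u) := by
    have h := macdonaldIntegral_ofReal (1 / 2) (y / q)
    rw [show ((1 / 2 : ℝ) : ℂ) = 1 / 2 by norm_num, macdonaldIntegral_one_half (by positivity),
      Complex.ofReal_inj] at h
    rw [h]
    norm_num
  rw [hJ, ← mul_zero q⁻¹, ← integral_comp_mul_left_Ioi' _ _ (inv_pos.2 hq), smul_eq_mul,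
    ← integral_const_mul, mul_zero]
  refine setIntegral_congr_fun measurableSet_Ioi fun r (hr : 0 < r) => ?_
  have hpow : q⁻¹ * q ^ (1 / 2 : ℝ) = q ^ (-(1 / 2) : ℝ) := by
    rw [← Real.rpow_neg_one, ← Real.rpow_add hq]
    norm_num
  rw [Real.mul_rpow (inv_nonneg.2 hq.le) hr.le, Real.inv_rpow hq.le, ← Real.rpow_neg hq.le, neg_neg,
    ← mul_assoc, ← mul_assoc, hpow]
  congr 2
  field_simp

lemma rpow_mul_one_sub_rpow_mul_exp_neg_two_mul_sqrt (α : ℝ) {y q : ℝ} (hy : 0 < y) (hq : 0 < q) :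
    q ^ (-α - 1 / 2) * (1 - q) ^ (α - 1) * (√π * Real.exp (-2 * √(y / q))) =
      ∫ r in Ioi 0, r ^ (-(1 / 2) : ℝ) * Real.exp (-y / r) *
        (q ^ (-α - 1) * (1 - q) ^ (α - 1) * Real.exp (-r / q)) := by
  rw [sqrt_pi_mul_exp_neg_two_mul_sqrt_div hy hq, ← integral_const_mul]
  refine integral_congr_ae (Eventually.of_forall fun r => ?_)
  have hexp : Real.exp (-r / q - y / r) = Real.exp (-y / r) * Real.exp (-r / q) := by
    rw [← Real.exp_add]
    ring_nf
  have hpow : q ^ (-α - 1 / 2) * q ^ (-(1 / 2) : ℝ) = q ^ (-α - 1) := by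
    rw [← Real.rpow_add hq]
    ring_nf
  simp only [hexp, ← hpow]
  ring

lemma integral_rpow_mul_one_sub_rpow_mul_exp_neg_two_mul_sqrt {α : ℝ} (hα : 0 < α) {y : ℝ}
    (hy : 0 < y) :
    ∫ q in Ioo (0 : ℝ) 1, q ^ (-α - 1 / 2) * (1 - q) ^ (α - 1) * (√π * Real.exp (-2 * √(y / q))) =
      Real.Gamma α * ∫ r in Ioi 0, r ^ (1 / 2 - α - 1) * Real.exp (-r - y / r) := by
  set F : ℝ → ℝ → ℝ := fun q r =>
    r ^ (-(1 / 2) : ℝ) * Real.exp (-y / r) *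
      (q ^ (-α - 1) * (1 - q) ^ (α - 1) * Real.exp (-r / q))
  have hinner : ∀ r ∈ Ioi (0 : ℝ), ∫ q in Ioo (0 : ℝ) 1, F q r =
      Real.Gamma α * (r ^ (1 / 2 - α - 1) * Real.exp (-r - y / r)) := by
    intro r (hr : 0 < r)
    rw [integral_const_mul, integral_rpow_mul_one_sub_rpow_mul_exp_neg_div hα hr,
      show 1 / 2 - α - 1 = -(1 / 2) + -α by ring, Real.rpow_add hr,
      show -r - y / r = -y / r + -r by ring, Real.exp_add]
    ring
  have hinner_integrable : ∀ r ∈ Ioi (0 : ℝ), IntegrableOn (F · r) (Ioo 0 1) := fun r hr => by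
    refine Integrable.of_integral_ne_zero ?_
    have : 0 < r := hr
    have : 0 < Real.Gamma α := Real.Gamma_pos_of_pos hα
    rw [hinner r hr]
    positivity
  have hmeas : Measurable (Function.uncurry F) := by fun_prop
  have hnonneg : ∀ r ∈ Ioi (0 : ℝ), ∀ q ∈ Ioo (0 : ℝ) 1, 0 ≤ F q r := by
    rintro r (hr : 0 < r) q ⟨hq₀, hq₁⟩
    have : 0 < 1 - q := sub_pos.2 hq₁
    positivity
  have hswap := integral_integral_swap_of_nonneg hmeas.aestronglyMeasurable
    ((ae_restrict_mem measurableSet_Ioi).mono fun r hr =>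
      (ae_restrict_mem measurableSet_Ioo).mono (hnonneg r hr))
    ((ae_restrict_mem measurableSet_Ioi).mono hinner_integrable)
    (IntegrableOn.congr_fun ((integrableOn_rpow_mul_exp_neg_sub_div _ hy).const_mul _)
      (fun r hr => (hinner r hr).symm) measurableSet_Ioi)
  rw [setIntegral_congr_fun measurableSet_Ioo fun q hq =>
      rpow_mul_one_sub_rpow_mul_exp_neg_two_mul_sqrt α hy hq.1, hswap,
    setIntegral_congr_fun measurableSet_Ioi hinner, integral_const_mul]

theorem besselK_eq_integral_exp_neg_div_sqrt {ν : ℝ} (h₀ : -(1 / 2) < ν) (h₁ : ν < 1) {z : ℝ}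
    (hz : 0 < z) :
    besselK ν z = (√π / (2 * Real.Gamma (ν + 1 / 2)) * (z / 2) ^ ν *
      ∫ q in Ioo (0 : ℝ) 1, q ^ (-ν - 1) * (1 - q) ^ (ν - 1 / 2) * Real.exp (-z / √q) : ℝ) := by
  have hre : |(ν : ℂ).re| < 1 := abs_lt.2 ⟨by rw [Complex.ofReal_re]; linarith, h₁⟩
  have hsqrt : ∀ q : ℝ, -2 * √(z ^ 2 / 4 / q) = -z / √q := fun q => by
    rw [Real.sqrt_div (by positivity), show z ^ 2 / 4 = (z / 2) ^ 2 by ring,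
      Real.sqrt_sq (half_pos hz).le]
    ring
  have hα : 0 < ν + 1 / 2 := by linarith
  have hmixture := integral_rpow_mul_one_sub_rpow_mul_exp_neg_two_mul_sqrt hα
    (show 0 < z ^ 2 / 4 by positivity)
  simp only [hsqrt, mul_left_comm _ (√π), integral_const_mul,
    show -(ν + 1 / 2) - 1 / 2 = -ν - 1 by ring, show ν + 1 / 2 - 1 = ν - 1 / 2 by ring,
    show 1 / 2 - (ν + 1 / 2) - 1 = -ν - 1 by ring] at hmixture
  rw [besselK_eq_macdonaldIntegral hre hz, ← Complex.ofReal_neg, macdonaldIntegral_ofReal,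
    ← Complex.ofReal_cpow (half_pos hz).le, show (1 / 2 : ℂ) = (1 / 2 : ℝ) by norm_num,
    ← Complex.ofReal_mul, ← Complex.ofReal_mul, Complex.ofReal_inj,
    eq_div_of_mul_eq (Real.Gamma_pos_of_pos hα).ne' ((mul_comm _ _).trans hmixture.symm)]
  ring

lemma integral_cexp_mul_exp_neg_mul_sq {b : ℝ} (hb : 0 < b) (t : ℝ) :
    ∫ x : ℝ, Complex.exp (Complex.I * t * x) * (Real.exp (-b * x ^ 2) : ℝ) =
      (√(π / b) * Real.exp (-t ^ 2 / (4 * b)) : ℝ) := by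
  have hsqrt : ((π : ℂ) / b) ^ (1 / 2 : ℂ) = (√(π / b) : ℝ) := by
    rw [Real.sqrt_eq_rpow, Complex.ofReal_cpow (by positivity)]
    norm_num
  push_cast
  rw [← hsqrt, ← fourierIntegral_gaussian (b := b) (by simpa using hb) t]

lemma integral_cexp_mul_integral_exp_neg_mul_sq {α : Type*} [MeasurableSpace α] {μ : Measure α}
    [SFinite μ] {ρ b : α → ℝ} (hρ : Measurable ρ) (hb : Measurable b)
    (hb_pos : ∀ᵐ q ∂μ, 0 < b q) (hint : Integrable (fun q => ρ q * √(π / b q)) μ) (t : ℝ) :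
    ∫ x : ℝ, Complex.exp (Complex.I * t * x) * (∫ q, ρ q * Real.exp (-b q * x ^ 2) ∂μ : ℝ) =
      (∫ q, ρ q * √(π / b q) * Real.exp (-t ^ 2 / (4 * b q)) ∂μ : ℝ) := by
  set F : ℝ → α → ℂ := fun x q =>
    Complex.exp (Complex.I * t * x) * (ρ q * Real.exp (-b q * x ^ 2) : ℝ) with hF
  have hmeas : Measurable (Function.uncurry F) := by
    simp only [hF, Function.uncurry_def]
    fun_prop
  have hnorm : ∀ x q, ‖F x q‖ = |ρ q| * Real.exp (-b q * x ^ 2) := fun x q => by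
    have hphase : Complex.I * t * x = (t * x : ℝ) * Complex.I := by push_cast; ring
    rw [norm_mul, hphase, Complex.norm_exp_ofReal_mul_I, one_mul, Complex.norm_real,
      Real.norm_eq_abs, abs_mul, Real.abs_exp]
  have hF_int : Integrable (Function.uncurry F) (volume.prod μ) := by
    refine (integrable_prod_iff' hmeas.aestronglyMeasurable).2 ⟨?_, hint.norm.congr ?_⟩
    · filter_upwards [hb_pos] with q hq
      exact ((integrable_exp_neg_mul_sq hq).const_mul |ρ q|).mono'
        hmeas.of_uncurry_right.aestronglyMeasurable (Eventually.of_forall fun x => (hnorm x q).le)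
    · refine Eventually.of_forall fun q => ?_
      simp only [Function.uncurry_apply_pair, hnorm]
      rw [integral_const_mul, integral_gaussian, norm_mul, Real.norm_eq_abs,
        Real.norm_of_nonneg (Real.sqrt_nonneg _)]
  have htransform : ∀ᵐ q ∂μ,
      ∫ x, F x q = (ρ q * √(π / b q) * Real.exp (-t ^ 2 / (4 * b q)) : ℝ) := by
    filter_upwards [hb_pos] with q hq
    rw [mul_assoc (ρ q), Complex.ofReal_mul (ρ q), ← integral_cexp_mul_exp_neg_mul_sq hq t,
      ← integral_const_mul]
    simp only [hF, Complex.ofReal_mul (ρ q), mul_left_comm _ (ρ q : ℂ)]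
  simp only [← integral_complex_ofReal, ← integral_const_mul]
  rw [integral_integral_swap hF_int, integral_congr_ae htransform]

lemma integral_mul_integral_mul_le_of_antivaryOn {α : Type*} [MeasurableSpace α] {μ : Measure α}
    {s : Set α} {ρ f g : α → ℝ} (hs : ∀ᵐ x ∂μ, x ∈ s) (hρ_nonneg : ∀ x ∈ s, 0 ≤ ρ x)
    (hfg_anti : AntivaryOn f g s) (hρ : Integrable ρ μ) (hf : Integrable (fun x => ρ x * f x) μ)
    (hg : Integrable (fun x => ρ x * g x) μ) (hfg : Integrable (fun x => ρ x * f x * g x) μ) :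
    (∫ x, ρ x ∂μ) * ∫ x, ρ x * f x * g x ∂μ ≤ (∫ x, ρ x * f x ∂μ) * ∫ x, ρ x * g x ∂μ := by
  set P := ∫ x, ρ x ∂μ
  set F := ∫ x, ρ x * f x ∂μ
  set G := ∫ x, ρ x * g x ∂μ
  set H := ∫ x, ρ x * f x * g x ∂μ
  have hlinear : ∀ a b c d : ℝ,
      ∫ x, (a * (ρ x * f x * g x) - b * (ρ x * f x) - c * (ρ x * g x) + d * ρ x) ∂μ =
        a * H - b * F - c * G + d * P := fun a b c d => by
    rw [integral_add, integral_sub, integral_sub, integral_const_mul, integral_const_mul,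
      integral_const_mul, integral_const_mul] <;> fun_prop
  have hinner : ∀ y ∈ s, 1 * H - g y * F - f y * G + f y * g y * P ≤ 0 := fun y hy => by
    rw [← hlinear]
    refine integral_nonpos_of_ae (hs.mono fun x hx => ?_)
    change _ ≤ (0 : ℝ)
    linear_combination mul_nonpos_of_nonneg_of_nonpos (hρ_nonneg x hx)
      (hfg_anti.sub_mul_sub_nonpos hy hx)
  have houter : P * H - G * F - F * G + H * P ≤ 0 := by
    rw [← hlinear]
    refine integral_nonpos_of_ae (hs.mono fun y hy => ?_)
    change _ ≤ (0 : ℝ)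
    linear_combination mul_nonpos_of_nonneg_of_nonpos (hρ_nonneg y hy) (hinner y hy)
  linarith

/-- The Laplace transform, in the variable `√q`, of the beta density `q ^ (δ - 1) (1 - q) ^ (ε - 1)`
on `(0, 1)`, left unnormalised. -/
noncomputable def betaLaplace (δ ε a : ℝ) : ℝ :=
  ∫ q in Ioo (0 : ℝ) 1, q ^ (δ - 1) * (1 - q) ^ (ε - 1) * Real.exp (-a * √q)

section betaLaplace

variable {δ ε a : ℝ}

lemma integrableOn_rpow_mul_one_sub_rpow (hδ : 0 < δ) (hε : 0 < ε) :
    IntegrableOn (fun q : ℝ => q ^ (δ - 1) * (1 - q) ^ (ε - 1)) (Ioo 0 1) := by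
  have h := (intervalIntegrable_iff_integrableOn_Ioo_of_le zero_le_one).1
    (Complex.betaIntegral_convergent (u := δ) (v := ε) (by simpa) (by simpa))
  refine IntegrableOn.congr_fun h.norm (fun q hq => ?_) measurableSet_Ioo
  have hsub : (1 - q : ℂ) = (1 - q : ℝ) := by push_cast; rfl
  rw [norm_mul, hsub, Complex.norm_cpow_eq_rpow_re_of_pos hq.1,
    Complex.norm_cpow_eq_rpow_re_of_pos (sub_pos.2 hq.2), Complex.sub_re, Complex.sub_re,
    Complex.ofReal_re, Complex.ofReal_re, Complex.one_re]

lemma integrableOn_betaLaplace (hδ : 0 < δ) (hε : 0 < ε) (ha : 0 ≤ a) :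
    IntegrableOn (fun q : ℝ => q ^ (δ - 1) * (1 - q) ^ (ε - 1) * Real.exp (-a * √q))
      (Ioo 0 1) := by
  refine (integrableOn_rpow_mul_one_sub_rpow hδ hε).mul_bdd (c := 1) ?_ ?_
  · fun_prop
  · refine Eventually.of_forall fun q => ?_
    rw [Real.norm_of_nonneg (Real.exp_pos _).le, Real.exp_le_one_iff, neg_mul, neg_nonpos]
    positivity

lemma betaLaplace_pos (hδ : 0 < δ) (hε : 0 < ε) (ha : 0 ≤ a) : 0 < betaLaplace δ ε a := by
  rw [betaLaplace, ← integral_Ioc_eq_integral_Ioo, ← intervalIntegral.integral_of_le zero_le_one]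
  refine intervalIntegral.intervalIntegral_pos_of_pos_on
    ((intervalIntegrable_iff_integrableOn_Ioo_of_le zero_le_one).2
      (integrableOn_betaLaplace hδ hε ha)) ?_ zero_lt_one
  rintro q ⟨hq₀, hq₁⟩
  have : 0 < 1 - q := sub_pos.2 hq₁
  positivity

lemma betaLaplace_antitoneOn (hδ : 0 < δ) (hε : 0 < ε) :
    AntitoneOn (betaLaplace δ ε) (Ici 0) := fun a ha b hb hab => by
  refine setIntegral_mono_on (integrableOn_betaLaplace hδ hε hb) (integrableOn_betaLaplace hδ hε ha)
    measurableSet_Ioo fun q ⟨hq₀, hq₁⟩ => ?_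
  have : 0 < 1 - q := sub_pos.2 hq₁
  gcongr

lemma integral_rpow_mul_exp_neg_mul_sqrt_le (hδ : 0 < δ) (ha : 0 < a) :
    ∫ q in Ioo (0 : ℝ) 1, q ^ (δ - 1) * Real.exp (-a * √q) ≤
      2 * Real.Gamma (2 * δ) * a ^ (-(2 * δ)) := by
  have hIoi := integral_rpow_mul_exp_neg_mul_rpow (p := 1 / 2) (q := δ - 1) (by norm_num)
    (by linarith) ha
  have hint := integrableOn_rpow_mul_exp_neg_mul_rpow (p := 1 / 2) (s := δ - 1) (by linarith)
    (by norm_num) ha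
  simp only [← Real.sqrt_eq_rpow] at hIoi hint
  calc ∫ q in Ioo (0 : ℝ) 1, q ^ (δ - 1) * Real.exp (-a * √q)
      ≤ ∫ q in Ioi (0 : ℝ), q ^ (δ - 1) * Real.exp (-a * √q) :=
        setIntegral_mono_set hint
          ((ae_restrict_mem measurableSet_Ioi).mono fun q (hq : 0 < q) => by positivity)
          Ioo_subset_Ioi_self.eventuallyLE
    _ = 2 * Real.Gamma (2 * δ) * a ^ (-(2 * δ)) := by
        rw [hIoi]
        ring_nf

lemma betaLaplace_mul_rpow_le (hδ : 0 < δ) (hε : 0 < ε) (hε₁ : ε ≤ 1) (ha : 0 < a) :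
    betaLaplace δ ε a * a ^ (2 * δ) ≤ Real.Gamma (2 * δ + 1) * betaLaplace δ ε 0 := by
  have hanti : AntivaryOn (fun q : ℝ => (1 - q) ^ (ε - 1)) (fun q => Real.exp (-a * √q))
      (Ioo 0 1) := by
    refine MonotoneOn.antivaryOn (fun q _ r hr hqr => ?_) (fun q _ r _ hqr => ?_)
    · exact Real.rpow_le_rpow_of_nonpos (sub_pos.2 hr.2) (by gcongr) (by linarith)
    · simp only [neg_mul]
      gcongr
  have hchebyshev := integral_mul_integral_mul_le_of_antivaryOn
    (ρ := fun q : ℝ => q ^ (δ - 1)) (ae_restrict_mem measurableSet_Ioo)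
    (fun q hq => Real.rpow_nonneg hq.1.le _) hanti
    (by simpa [IntegrableOn] using integrableOn_rpow_mul_one_sub_rpow hδ one_pos)
    (integrableOn_rpow_mul_one_sub_rpow hδ hε)
    (by simpa [IntegrableOn] using integrableOn_betaLaplace hδ one_pos ha.le)
    (integrableOn_betaLaplace hδ hε ha.le)
  have hmass : ∫ q in Ioo (0 : ℝ) 1, q ^ (δ - 1) = 1 / δ := by
    rw [← integral_Ioc_eq_integral_Ioo, ← intervalIntegral.integral_of_le zero_le_one,
      integral_rpow (Or.inl (by linarith)), sub_add_cancel, Real.one_rpow, Real.zero_rpow hδ.ne',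
      sub_zero]
  have hzero : ∫ q in Ioo (0 : ℝ) 1, q ^ (δ - 1) * (1 - q) ^ (ε - 1) = betaLaplace δ ε 0 := by
    simp [betaLaplace]
  rw [hmass, hzero, ← betaLaplace, one_div, inv_mul_le_iff₀ hδ] at hchebyshev
  calc betaLaplace δ ε a * a ^ (2 * δ)
      ≤ δ * (betaLaplace δ ε 0 * (2 * Real.Gamma (2 * δ) * a ^ (-(2 * δ)))) * a ^ (2 * δ) := by
        have := betaLaplace_pos hδ hε le_rfl
        refine mul_le_mul_of_nonneg_right (hchebyshev.trans ?_) (by positivity)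
        gcongr
        exact integral_rpow_mul_exp_neg_mul_sqrt_le hδ ha
    _ = Real.Gamma (2 * δ + 1) * betaLaplace δ ε 0 := by
        rw [Real.Gamma_add_one (by positivity), Real.rpow_neg ha.le]
        have : a ^ (2 * δ) ≠ 0 := by positivity
        field_simp

lemma betaLaplace_le_mul_one_add_sq_rpow_neg (hδ : 0 < δ) (hδ₁ : δ ≤ 1) (hε : 0 < ε)
    (hε₁ : ε ≤ 1) (ha : 0 ≤ a) :
    betaLaplace δ ε a ≤
      (1 + Real.Gamma (2 * δ + 1)) * betaLaplace δ ε 0 * (1 + a ^ 2) ^ (-δ) := by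
  have hle : betaLaplace δ ε a ≤ betaLaplace δ ε 0 :=
    betaLaplace_antitoneOn hδ hε self_mem_Ici ha ha
  have hdecay : betaLaplace δ ε a * a ^ (2 * δ) ≤ Real.Gamma (2 * δ + 1) * betaLaplace δ ε 0 := by
    rcases ha.eq_or_lt with rfl | ha
    · have := betaLaplace_pos hδ hε le_rfl
      have := Real.Gamma_pos_of_pos (show 0 < 2 * δ + 1 by positivity)
      rw [Real.zero_rpow (by positivity), mul_zero]
      positivity
    · exact betaLaplace_mul_rpow_le hδ hε hε₁ ha
  have hsubadd : (1 + a ^ 2) ^ δ ≤ 1 + a ^ (2 * δ) := by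
    simpa [← Real.rpow_natCast_mul ha] using
      Real.rpow_add_le_add_rpow zero_le_one (sq_nonneg a) hδ.le hδ₁
  have hpos : 0 < (1 + a ^ 2) ^ δ := by positivity
  rw [Real.rpow_neg (by positivity), ← div_eq_mul_inv, le_div_iff₀ hpos]
  calc betaLaplace δ ε a * (1 + a ^ 2) ^ δ
      ≤ betaLaplace δ ε a * (1 + a ^ (2 * δ)) := by
        have := betaLaplace_pos hδ hε ha
        gcongr
    _ ≤ (1 + Real.Gamma (2 * δ + 1)) * betaLaplace δ ε 0 := by linarith

lemma betaLaplace_pi_mul_sq_le (hδ : 0 < δ) (hδ₁ : δ ≤ 1) (hε : 0 < ε) (hε₁ : ε ≤ 1) (η : ℝ) :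
    betaLaplace δ ε (π * η ^ 2 / 2) ≤
      (1 + Real.Gamma (2 * δ + 1)) * betaLaplace δ ε 0 * (1 + η ^ 4) ^ (-δ) := by
  have hle : η ^ 2 ≤ π * η ^ 2 / 2 := by nlinarith [Real.pi_gt_three, sq_nonneg η]
  rw [show η ^ 4 = (η ^ 2) ^ 2 by ring]
  exact (betaLaplace_antitoneOn hδ hε (sq_nonneg η) ((sq_nonneg η).trans hle) hle).trans
    (betaLaplace_le_mul_one_add_sq_rpow_neg hδ hδ₁ hε hε₁ (sq_nonneg η))

end betaLaplace

lemma abs_rpow_mul_besselK_mul_sq {ν : ℝ} (h₀ : -(1 / 2) < ν) (h₁ : ν < 1) {b : ℝ} (hb : 0 < b)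
    {x : ℝ} (hx : x ≠ 0) :
    ((|x| ^ (-2 * ν) : ℝ) : ℂ) * besselK ν (b * x ^ 2 : ℝ) =
      (√π / (2 * Real.Gamma (ν + 1 / 2)) * (b / 2) ^ ν * ∫ q in Ioo (0 : ℝ) 1,
        q ^ (-ν - 1) * (1 - q) ^ (ν - 1 / 2) * Real.exp (-(b / √q) * x ^ 2) : ℝ) := by
  have hx₀ : 0 < |x| := abs_pos.2 hx
  have hpow : |x| ^ (-2 * ν) * (b * x ^ 2 / 2) ^ ν = (b / 2) ^ ν := by
    rw [← sq_abs x, mul_div_right_comm, Real.mul_rpow (by positivity) (by positivity),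
      ← Real.rpow_natCast, ← Real.rpow_mul hx₀.le, mul_left_comm, ← Real.rpow_add hx₀]
    norm_num
  have hexp : ∀ q : ℝ, -(b * x ^ 2) / √q = -(b / √q) * x ^ 2 := fun q => by ring
  rw [besselK_eq_integral_exp_neg_div_sqrt h₀ h₁ (by positivity), ← hpow, ← Complex.ofReal_mul]
  simp only [hexp]
  ring_nf

lemma rpow_mul_one_sub_rpow_mul_sqrt (ν b : ℝ) {q : ℝ} (hq : 0 < q) :
    q ^ (-ν - 1) * (1 - q) ^ (ν - 1 / 2) * √(π / (b / √q)) =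
      √(π / b) * (q ^ (1 / 4 - ν - 1) * (1 - q) ^ (ν + 1 / 2 - 1)) := by
  have hroot : √√q = q ^ (1 / 4 : ℝ) := by
    rw [Real.sqrt_eq_rpow, Real.sqrt_eq_rpow, ← Real.rpow_mul hq.le]
    norm_num
  rw [← div_mul, Real.sqrt_mul' _ (Real.sqrt_nonneg q), hroot,
    show 1 / 4 - ν - 1 = -ν - 1 + 1 / 4 by ring, Real.rpow_add hq,
    show ν + 1 / 2 - 1 = ν - 1 / 2 by ring]
  ring

theorem integral_cexp_mul_abs_rpow_mul_besselK {ν : ℝ} (h₀ : -(1 / 2) < ν) (h₁ : ν < 1 / 4)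
    {b : ℝ} (hb : 0 < b) (t : ℝ) :
    ∫ x : ℝ, Complex.exp (Complex.I * t * x) *
        (((|x| ^ (-2 * ν) : ℝ) : ℂ) * besselK ν (b * x ^ 2 : ℝ)) =
      (√π / (2 * Real.Gamma (ν + 1 / 2)) * (b / 2) ^ ν * √(π / b) *
        betaLaplace (1 / 4 - ν) (ν + 1 / 2) (t ^ 2 / (4 * b)) : ℝ) := by
  set ρ : ℝ → ℝ := fun q => q ^ (-ν - 1) * (1 - q) ^ (ν - 1 / 2) with hρ
  have hint : IntegrableOn (fun q => ρ q * √(π / (b / √q))) (Ioo 0 1) :=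
    IntegrableOn.congr_fun ((integrableOn_rpow_mul_one_sub_rpow (by linarith)
      (by linarith)).const_mul _) (fun q hq => (rpow_mul_one_sub_rpow_mul_sqrt ν b hq.1).symm)
      measurableSet_Ioo
  have hfourier := integral_cexp_mul_integral_exp_neg_mul_sq (ρ := ρ) (b := fun q => b / √q)
    (by fun_prop) (by fun_prop) ((ae_restrict_mem measurableSet_Ioo).mono fun q hq =>
      div_pos hb (Real.sqrt_pos.2 hq.1)) hint t
  have hbeta : ∫ q in Ioo (0 : ℝ) 1, ρ q * √(π / (b / √q)) * Real.exp (-t ^ 2 / (4 * (b / √q))) =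
      √(π / b) * betaLaplace (1 / 4 - ν) (ν + 1 / 2) (t ^ 2 / (4 * b)) := by
    rw [betaLaplace, ← integral_const_mul]
    refine setIntegral_congr_fun measurableSet_Ioo fun q hq => ?_
    have hexp : -t ^ 2 / (4 * (b / √q)) = -(t ^ 2 / (4 * b)) * √q := by
      have := Real.sqrt_pos.2 hq.1
      field_simp
    simp only [hρ, rpow_mul_one_sub_rpow_mul_sqrt ν b hq.1, hexp]
    ring
  rw [hbeta] at hfourier
  rw [mul_assoc (_ * _) (√(π / b)), Complex.ofReal_mul, ← hfourier, ← integral_const_mul]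
  refine integral_congr_ae ?_
  filter_upwards [compl_mem_ae_iff.2 (measure_singleton (0 : ℝ))] with x hx
  rw [abs_rpow_mul_besselK_mul_sq h₀ (by linarith) hb hx, Complex.ofReal_mul (_ * _),
    mul_left_comm]

lemma exists_integral_eq_mul_betaLaplace {s : ℝ} (hs₀ : 0 < s) (hs₃ : s < 3) :
    ∃ c : ℝ, 0 < c ∧ ∀ ξ r : ℝ,
      ∫ x : ℝ, Complex.exp (-2 * (π : ℂ) * Complex.I * x * ξ / (r : ℝ)) *
          ((|x| ^ (1 - s / 2) : ℝ) : ℂ) * besselK ((s - 2) / 4 : ℝ) (2 * π * x ^ 2 : ℝ) =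
        (c * betaLaplace ((3 - s) / 4) (s / 4) (π * (ξ / r) ^ 2 / 2) : ℝ) := by
  set ν := (s - 2) / 4 with hν
  have hΓ : 0 < Real.Gamma (ν + 1 / 2) := Real.Gamma_pos_of_pos (by linarith)
  refine ⟨√π / (2 * Real.Gamma (ν + 1 / 2)) * (2 * π / 2) ^ ν * √(π / (2 * π)), by positivity,
    fun ξ r => ?_⟩
  have hphase : ∀ x : ℝ, -2 * (π : ℂ) * Complex.I * x * ξ / (r : ℝ) =
      Complex.I * (-2 * π * (ξ / r) : ℝ) * x := fun x => by push_cast; ring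
  have harg : π * (ξ / r) ^ 2 / 2 = (-2 * π * (ξ / r)) ^ 2 / (4 * (2 * π)) := by
    field_simp
    ring
  rw [harg, show (3 - s) / 4 = 1 / 4 - ν by rw [hν]; ring,
    show s / 4 = ν + 1 / 2 by rw [hν]; ring, ← integral_cexp_mul_abs_rpow_mul_besselK
      (by linarith) (by linarith) Real.two_pi_pos]
  simp only [hphase, mul_assoc (Complex.exp _), show 1 - s / 2 = -2 * ν by rw [hν]; ring]

lemma pow_four_add_sq_rpow (ξ₁ : ℝ) {ξ₂ : ℝ} (hξ₂ : ξ₂ ≠ 0) (p : ℝ) :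
    (ξ₁ ^ 4 + ξ₂ ^ 2) ^ p = |ξ₂| ^ (2 * p) * (1 + (ξ₁ / √|ξ₂|) ^ 4) ^ p := by
  have hsqrt : √|ξ₂| ^ 4 = ξ₂ ^ 2 := by
    rw [show √|ξ₂| ^ 4 = (√|ξ₂| ^ 2) ^ 2 by ring, Real.sq_sqrt (abs_nonneg _), sq_abs]
  have hfactor : ξ₁ ^ 4 + ξ₂ ^ 2 = |ξ₂| ^ 2 * (1 + (ξ₁ / √|ξ₂|) ^ 4) := by
    rw [div_pow, hsqrt, sq_abs]
    field_simp
    ring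
  rw [hfactor, Real.mul_rpow (by positivity) (by positivity),
    ← Real.rpow_natCast_mul (abs_nonneg _), Nat.cast_ofNat]

theorem besselK_oscillatory_bound_general (s : ℝ) (hs : s ∈ Set.Ioo (0 : ℝ) 3) :
    ∃ C : ℝ, 0 < C ∧ ∀ (ξ₁ ξ₂ : ℝ), ξ₂ ≠ 0 → ∀ Q : ℂ,
      Q = ((|ξ₂| ^ ((s - 3) / 2) : ℝ) : ℂ) *
          ∫ x : ℝ,
            Complex.exp (-2 * (Real.pi : ℂ) * Complex.I * (x : ℂ) * (ξ₁ : ℂ) /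
                ((Real.sqrt |ξ₂| : ℝ) : ℂ)) *
              ((|x| ^ (1 - s / 2) : ℝ) : ℂ) *
              besselK (((s - 2) / 4 : ℝ) : ℂ) ((2 * Real.pi * x ^ 2 : ℝ) : ℂ) →
      Q.im = 0 ∧ 0 < Q.re ∧ Q.re ≤ C * (ξ₁ ^ 4 + ξ₂ ^ 2) ^ (-((3 - s) / 4)) := by
  obtain ⟨hs₀, hs₃⟩ := hs
  obtain ⟨c, hc, hfourier⟩ := exists_integral_eq_mul_betaLaplace hs₀ hs₃
  have hδ : 0 < (3 - s) / 4 := by linarith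
  have hε : 0 < s / 4 := by linarith
  have := betaLaplace_pos hδ hε le_rfl
  have := Real.Gamma_pos_of_pos (show 0 < 2 * ((3 - s) / 4) + 1 by positivity)
  refine ⟨c * ((1 + Real.Gamma (2 * ((3 - s) / 4) + 1)) * betaLaplace ((3 - s) / 4) (s / 4) 0),
    by positivity, fun ξ₁ ξ₂ hξ₂ Q hQ => ?_⟩
  set η := ξ₁ / √|ξ₂| with hη
  rw [hfourier, ← Complex.ofReal_mul, ← hη] at hQ
  have hpos := betaLaplace_pos hδ hε (show 0 ≤ π * η ^ 2 / 2 by positivity)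
  have hbound := betaLaplace_pi_mul_sq_le hδ (by linarith) hε (by linarith) η
  have : 0 < |ξ₂| := abs_pos.2 hξ₂
  rw [hQ, Complex.ofReal_im, Complex.ofReal_re, pow_four_add_sq_rpow ξ₁ hξ₂, ← hη,
    show 2 * -((3 - s) / 4) = (s - 3) / 2 by ring]
  refine ⟨rfl, by positivity, ?_⟩
  linear_combination |ξ₂| ^ ((s - 3) / 2) * c * hbound

/-- **Estimate (3.7).** For `s ∈ (1,3)` there is `C_s > 0` such that for all `ξ₁ ∈ ℝ` and
nonzero `ξ₂ ∈ ℝ`, the quantity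
`Q = |ξ₂|^{(s-3)/2} ∫_ℝ e^{-2πixξ₁/|ξ₂|^{1/2}} |x|^{1-s/2} K_{(s-2)/4}(2πx²) dx`
is real, strictly positive, and at most `C_s (ξ₁⁴ + ξ₂²)^{-(3-s)/4}`. -/
theorem besselK_oscillatory_bound (s : ℝ) (hs : s ∈ Set.Ioo (1 : ℝ) 3) :
    ∃ C : ℝ, 0 < C ∧ ∀ (ξ₁ ξ₂ : ℝ), ξ₂ ≠ 0 → ∀ Q : ℂ,
      Q = ((|ξ₂| ^ ((s - 3) / 2) : ℝ) : ℂ) *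
          ∫ x : ℝ,
            Complex.exp (-2 * (Real.pi : ℂ) * Complex.I * (x : ℂ) * (ξ₁ : ℂ) /
                ((Real.sqrt |ξ₂| : ℝ) : ℂ)) *
              ((|x| ^ (1 - s / 2) : ℝ) : ℂ) *
              besselK (((s - 2) / 4 : ℝ) : ℂ) ((2 * Real.pi * x ^ 2 : ℝ) : ℂ) →
      Q.im = 0 ∧ 0 < Q.re ∧ Q.re ≤ C * (ξ₁ ^ 4 + ξ₂ ^ 2) ^ (-((3 - s) / 4)) := by
  exact besselK_oscillatory_bound_general s ⟨by linarith [hs.1], hs.2⟩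
end

section
/- For all z, ζ ∈ ℂ and all θ ∈ ℝ, the identity ω(π_{V_θ}(z), z) − ω(π_{V_θ}(ζ), ζ) = ω(z, ζ) + ω(π_{V_θ}(z+ζ), z−ζ) holds, where ω(z,ζ) = Im(z·conj(ζ)) and π_{V_θ}(w) = ⟨w, e^{iθ}⟩ e^{iθ} is the orthogonal projection of ℝ² ≅ ℂ onto the line spanned by e^{iθ} (with ⟨·,·⟩ the real inner product on ℂ ≅ ℝ², ⟨w, v⟩ = Re(w·conj(v))). -/
/-!
Expanding both sides, the identity for a bilinear alternating `ω` and a linear `P` amounts to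
`ω(P z, ζ) + ω(z, P ζ) = ω(z, ζ)`. In the plane the left side is `tr(P) ω(z, ζ)`: it is the
coefficient of `t` in `ω((1 + tP) z, (1 + tP) ζ) = det(1 + tP) ω(z, ζ)`. The orthogonal
projection onto a line has trace `1`.
-/

open scoped Real

/-- The symplectic form `ω(a,b) = Im (a * conj b)` on `ℂ ≅ ℝ²`. -/
noncomputable def omegaForm (a b : ℂ) : ℝ := (a * (starRingEnd ℂ) b).im

/-- Orthogonal projection of `ℝ² ≅ ℂ` onto the line spanned by `e^{iθ}`:
`π_{V_θ}(w) = ⟨w, e^{iθ}⟩ e^{iθ}` with `⟨w,v⟩ = Re (w * conj v)`. -/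
noncomputable def projLine (θ : ℝ) (w : ℂ) : ℂ :=
  (((w * (starRingEnd ℂ) (Complex.exp (θ * Complex.I))).re : ℝ) : ℂ) *
    Complex.exp (θ * Complex.I)

section AlternatingForm

variable {R M N : Type*} [CommRing R] [AddCommGroup M] [Module R M] [AddCommGroup N] [Module R N]
  {B : M →ₗ[R] M →ₗ[R] N}

theorem apply_add_apply_eq_trace_smul_of_isAlt (b : Module.Basis (Fin 2) R M) (hB : B.IsAlt)
    (f : M →ₗ[R] M) (x y : M) :
    B (f x) y + B x (f y) = LinearMap.trace R M f • B x y := by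
  have apply_basis (j : Fin 2) :
      f (b j) = LinearMap.toMatrix b b f 0 j • b 0 + LinearMap.toMatrix b b f 1 j • b 1 := by
    simpa only [LinearMap.toMatrix_apply, Fin.sum_univ_two] using (b.sum_repr (f (b j))).symm
  have trace_eq : LinearMap.trace R M f =
      LinearMap.toMatrix b b f 0 0 + LinearMap.toMatrix b b f 1 1 := by
    rw [LinearMap.trace_eq_matrix_trace R b, Matrix.trace_fin_two]
  suffices B ∘ₗ f + B.compl₂ f = LinearMap.trace R M f • B from LinearMap.congr_fun₂ this x y
  refine LinearMap.ext_basis b b fun i j ↦ ?_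
  simp only [LinearMap.add_apply, LinearMap.comp_apply, LinearMap.compl₂_apply,
    LinearMap.smul_apply, apply_basis, trace_eq, map_add, map_smul]
  fin_cases i <;> fin_cases j <;>
    simp [hB.self_eq_zero, ← hB.neg (b 0) (b 1), add_smul, add_comm]

theorem omega_proj_identity_general (b : Module.Basis (Fin 2) R M) (hB : B.IsAlt)
    (f : M →ₗ[R] M) (x y : M) :
    B (f x) x - B (f y) y = LinearMap.trace R M f • B x y + B (f (x + y)) (x - y) := by
  rw [← apply_add_apply_eq_trace_smul_of_isAlt b hB f x y, ← hB.neg (f y) x]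
  simp only [map_add, map_sub, LinearMap.add_apply]
  abel

end AlternatingForm

theorem isAlt_flip_areaForm {E : Type*} [NormedAddCommGroup E] [InnerProductSpace ℝ E]
    [Fact (Module.finrank ℝ E = 2)] (o : Orientation ℝ E (Fin 2)) : o.areaForm.flip.IsAlt :=
  o.areaForm_apply_self

attribute [local instance] Complex.finrank_real_complex_fact

theorem omegaForm_eq_flip_areaForm (a b : ℂ) :
    omegaForm a b = Complex.orientation.areaForm.flip a b := by
  rw [LinearMap.flip_apply, Complex.areaForm, omegaForm, mul_comm]

theorem projLine_eq_rankOne (θ : ℝ) (w : ℂ) :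
    projLine θ w = InnerProductSpace.rankOne ℝ (Complex.exp (θ * Complex.I))
      (Complex.exp (θ * Complex.I)) w := by
  rw [InnerProductSpace.rankOne_apply, Complex.inner, Complex.real_smul, projLine]

theorem trace_rankOne_self_of_norm_eq_one {𝕜 E : Type*} [RCLike 𝕜] [NormedAddCommGroup E]
    [InnerProductSpace 𝕜 E] [FiniteDimensional 𝕜 E] {e : E} (he : ‖e‖ = 1) :
    LinearMap.trace 𝕜 E (InnerProductSpace.rankOne 𝕜 e e) = 1 := by
  rw [InnerProductSpace.trace_rankOne, inner_self_eq_norm_sq_to_K, he]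
  simp

/-- The identity `ω(π_{V_θ}(z), z) - ω(π_{V_θ}(ζ), ζ) = ω(z,ζ) + ω(π_{V_θ}(z+ζ), z-ζ)`. -/
theorem omega_proj_identity (z ζ : ℂ) (θ : ℝ) :
    omegaForm (projLine θ z) z - omegaForm (projLine θ ζ) ζ =
      omegaForm z ζ + omegaForm (projLine θ (z + ζ)) (z - ζ) := by
  simpa only [omegaForm_eq_flip_areaForm, projLine_eq_rankOne, ContinuousLinearMap.coe_coe,
    trace_rankOne_self_of_norm_eq_one (Complex.norm_exp_ofReal_mul_I θ), one_smul] using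
    omega_proj_identity_general Complex.basisOneI (isAlt_flip_areaForm Complex.orientation)
      (InnerProductSpace.rankOne ℝ (Complex.exp (θ * Complex.I)) (Complex.exp (θ * Complex.I))) z ζ
end
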